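/- Failure at arbitrary quantifier rank: There exists a finite relational signature σ such that for every r ≥ 1 and k ≥ 2 there is a first-order sentence φ over σ that is preserved under ≼_{r,∞,k} over the class of all finite σ-structures but is not equivalent over the class of all finite σ-structures to any existential local sentence. -/

import Mathlib

open FirstOrder FirstOrder.Language

universe u v w

namespace Gaifman

/-- Two elements are adjacent in the Gaifman graph of a structure: they are distinct and
occur together in some tuple belonging to some relation. -/
def Adj (L : FirstOrder.Language.{u, u}) (M : Type u) [L.Structure M] (a b : M) : Prop :=
  a ≠ b ∧ ∃ (n : ℕ) (R : L.Relations n) (t : Fin n → M),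
    Structure.RelMap R t ∧ a ∈ Set.range t ∧ b ∈ Set.range t

/-- `CloseLE L M r a b` holds iff the Gaifman distance from `a` to `b` is at most `r`. -/
def CloseLE (L : FirstOrder.Language.{u, u}) (M : Type u) [L.Structure M] :
    ℕ → M → M → Prop
  | 0, a, b => a = b
  | r + 1, a, b => CloseLE L M r a b ∨ ∃ c, CloseLE L M r a c ∧ Adj L M c b

lemma closeLE_self (L : FirstOrder.Language.{u, u}) (M : Type u) [L.Structure M] :
    ∀ (r : ℕ) (a : M), CloseLE L M r a a
  | 0, _ => rfl
  | r + 1, a => Or.inl (closeLE_self L M r a)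

/-- The `r`-neighborhood of a tuple: all elements at Gaifman distance at most `r`
from some component of the tuple. -/
def Ball (L : FirstOrder.Language.{u, u}) {M : Type u} [L.Structure M] {m : ℕ}
    (a : Fin m → M) (r : ℕ) : Set M :=
  {x | ∃ i, CloseLE L M r (a i) x}

lemma self_mem_ball (L : FirstOrder.Language.{u, u}) {M : Type u} [L.Structure M] {m : ℕ}
    (a : Fin m → M) (r : ℕ) (i : Fin m) :
    a i ∈ Ball L a r := ⟨i, closeLE_self L M r (a i)⟩

/-- The substructure induced on a subset of a structure over a relational language. -/
def inducedStructure (L : FirstOrder.Language.{u, u}) [L.IsRelational] {M : Type u}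
    [L.Structure M] (s : Set M) : L.Structure s where
  funMap {n} f _ := isEmptyElim f
  RelMap {n} R t := Structure.RelMap R fun i => (t i : M)

/-- A formula is `r`-local if its truth at a tuple only depends on the induced substructure on
the `r`-neighborhood of the tuple. -/
def IsLocal {L : FirstOrder.Language.{u, u}} [L.IsRelational] (r : ℕ) {m : ℕ}
    (φ : L.Formula (Fin m)) : Prop :=
  ∀ (M : Type u) [L.Structure M] (a : Fin m → M),
    φ.Realize a ↔
      (letI := inducedStructure L (Ball L a r)
       φ.Realize fun i => (⟨a i, self_mem_ball L a r i⟩ : Ball L a r))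

/-- Quantifier rank of a (bounded) formula. -/
def qr {L : FirstOrder.Language.{u, u}} {α : Type v} : ∀ {n : ℕ}, L.BoundedFormula α n → ℕ
  | _, .falsum => 0
  | _, .equal _ _ => 0
  | _, .rel _ _ => 0
  | _, .imp f g => max (qr f) (qr g)
  | _, .all f => qr f + 1

/-- The components of a tuple are at pairwise Gaifman distance greater than `s`. -/
def Far (L : FirstOrder.Language.{u, u}) (M : Type u) [L.Structure M] (s : ℕ) {m : ℕ}
    (a : Fin m → M) : Prop :=
  ∀ i j : Fin m, i ≠ j → ¬ CloseLE L M s (a i) (a j)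

/-- `A ≼_{r,q,k} B` : every sentence `∃ x₁ … x_k, τ` with `τ` an `r`-local formula of
quantifier rank at most `q` that holds in `A` also holds in `B`. -/
def LocLE (L : FirstOrder.Language.{u, u}) [L.IsRelational] (r q k : ℕ) (M N : Type u)
    [L.Structure M] [L.Structure N] : Prop :=
  ∀ τ : L.Formula (Fin k), IsLocal r τ → qr τ ≤ q →
    (∃ a : Fin k → M, τ.Realize a) → ∃ b : Fin k → N, τ.Realize b

/-- The preorder `≼_{r,q,k}` with radius and rank parameters in `ℕ ∪ {∞}`: the intersection
over all finite parameters below the given ones. -/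
def LocLEE (L : FirstOrder.Language.{u, u}) [L.IsRelational] (r q : ℕ∞) (k : ℕ)
    (M N : Type u) [L.Structure M] [L.Structure N] : Prop :=
  ∀ r' q' : ℕ, (r' : ℕ∞) ≤ r → (q' : ℕ∞) ≤ q → LocLE L r' q' k M N

/-- Local elementary embedding. -/
def IsLocalElemEmb (L : FirstOrder.Language.{u, u}) [L.IsRelational] {M N : Type u}
    [L.Structure M] [L.Structure N] (h : M → N) : Prop :=
  ∀ (k r : ℕ) (a : Fin k → M) (φ : L.Formula (Fin k)), IsLocal r φ →
    (φ.Realize a ↔ φ.Realize (h ∘ a))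

/-- Disjoint union of two structures over a relational language. -/
def sumStructure (L : FirstOrder.Language.{u, u}) [L.IsRelational] (M N : Type u)
    [L.Structure M] [L.Structure N] : L.Structure (M ⊕ N) where
  funMap {n} f _ := isEmptyElim f
  RelMap {n} R t :=
    (∃ tm : Fin n → M, t = Sum.inl ∘ tm ∧ Structure.RelMap R tm) ∨
    (∃ tn : Fin n → N, t = Sum.inr ∘ tn ∧ Structure.RelMap R tn)

/-- A bundled `L`-structure. -/
structure Struc (L : FirstOrder.Language.{u, u}) : Type (u + 1) where
  carrier : Type u
  str : L.Structure carrier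

attribute [instance] Struc.str

/-- The `(q,r)`-local type of a tuple. -/
def localType (L : FirstOrder.Language.{u, u}) [L.IsRelational] (r q : ℕ) {M : Type u}
    [L.Structure M] {m : ℕ} (a : Fin m → M) : Set (L.Formula (Fin m)) :=
  {τ | IsLocal r τ ∧ qr τ ≤ q ∧ τ.Realize a}

/-- The collection of `(q,r)`-local types of tuples of at most `k` elements. -/
def Specter (L : FirstOrder.Language.{u, u}) [L.IsRelational] (r q k : ℕ) (M : Type u)
    [L.Structure M] : Set (Σ m : ℕ, Set (L.Formula (Fin m))) :=
  {p | ∃ m, m ≤ k ∧ ∃ a : Fin m → M, p = ⟨m, localType L r q a⟩}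

/-- The data of a basic local sentence
`∃ x₁ … x_k, (⋀_{i ≠ j} d(xᵢ,xⱼ) > 2r ∧ ⋀ᵢ ψ(xᵢ))`. -/
structure BasicLocal (L : FirstOrder.Language.{u, u}) [L.IsRelational] where
  k : ℕ
  r : ℕ
  ψ : L.Formula (Fin 1)
  isLocal : IsLocal r ψ

/-- Truth of a basic local sentence in a structure. -/
def BasicLocal.Holds {L : FirstOrder.Language.{u, u}} [L.IsRelational] (b : BasicLocal L)
    (M : Type u) [L.Structure M] : Prop :=
  ∃ a : Fin b.k → M, Far L M (2 * b.r) a ∧ ∀ i, b.ψ.Realize fun _ => a i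

/-- The data of an asymmetric basic local sentence
`∃ x₁ … x_k, (⋀_{i ≠ j} d(xᵢ,xⱼ) > 2r ∧ ⋀ᵢ ψᵢ(xᵢ))`. -/
structure AsymBasicLocal (L : FirstOrder.Language.{u, u}) [L.IsRelational] where
  k : ℕ
  r : ℕ
  ψ : Fin k → L.Formula (Fin 1)
  isLocal : ∀ i, IsLocal r (ψ i)

/-- Truth of an asymmetric basic local sentence in a structure. -/
def AsymBasicLocal.Holds {L : FirstOrder.Language.{u, u}} [L.IsRelational]
    (d : AsymBasicLocal L) (M : Type u) [L.Structure M] : Prop :=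
  ∃ a : Fin d.k → M, Far L M (2 * d.r) a ∧ ∀ i, (d.ψ i).Realize fun _ => a i

/-- Positive Boolean combinations (conjunction and disjunction only). -/
inductive PosBool (α : Type w) : Type w
  | base : α → PosBool α
  | conj : PosBool α → PosBool α → PosBool α
  | disj : PosBool α → PosBool α → PosBool α

/-- Evaluation of a positive Boolean combination against a truth assignment. -/
def PosBool.Eval {α : Type w} (v : α → Prop) : PosBool α → Prop
  | .base a => v a
  | .conj p q => p.Eval v ∧ q.Eval v
  | .disj p q => p.Eval v ∨ q.Eval v

/-- `φ` is equivalent over the class `C` to an existential local sentence `∃ x⃗, τ(x⃗)`. -/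
def EquivToExistLocal {L : FirstOrder.Language.{u, u}} [L.IsRelational]
    (C : Set (Struc L)) (φ : L.Sentence) : Prop :=
  ∃ (k r : ℕ) (τ : L.Formula (Fin k)), IsLocal r τ ∧
    ∀ S ∈ C, (S.carrier ⊨ φ ↔ ∃ a : Fin k → S.carrier, τ.Realize a)

/-- `A ⊆ᵢ B` : `A` is isomorphic to an induced substructure of `B`. -/
def SubInd {L : FirstOrder.Language.{u, u}} (A B : Struc L) : Prop :=
  Nonempty (A.carrier ↪[L] B.carrier)

/-- A hereditary class: closed under induced substructures. -/
def Hereditary {L : FirstOrder.Language.{u, u}} (C : Set (Struc L)) : Prop :=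
  ∀ B ∈ C, ∀ A : Struc L, SubInd A B → A ∈ C

/-- `φ` is preserved under extensions over `C`. -/
def PreservedUnderExt {L : FirstOrder.Language.{u, u}} (C : Set (Struc L))
    (φ : L.Sentence) : Prop :=
  ∀ A ∈ C, ∀ B ∈ C, A.carrier ⊨ φ → SubInd A B → B.carrier ⊨ φ

/-- `C` is closed under disjoint unions with finite structures. -/
def ClosedUnderDisjointUnions {L : FirstOrder.Language.{u, u}} [L.IsRelational]
    (C : Set (Struc L)) : Prop :=
  ∀ A ∈ C, ∀ B : Struc L, Finite B.carrier →
    (⟨A.carrier ⊕ B.carrier, sumStructure L A.carrier B.carrier⟩ : Struc L) ∈ C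

/-- `Balls(C, r, k)` : the structures isomorphic to an `r`-neighborhood of a tuple of at most
`k` elements of a structure of `C`. -/
def BallsClass {L : FirstOrder.Language.{u, u}} [L.IsRelational] (C : Set (Struc L))
    (r k : ℕ) : Set (Struc L) :=
  {T | ∃ A ∈ C, ∃ m, m ≤ k ∧ ∃ a : Fin m → A.carrier,
    letI := inducedStructure L (Ball L a r)
    Nonempty (T.carrier ≃[L] ↥(Ball L a r))}

/-- A `⊆ᵢ`-minimal model of `φ` in `C`: a model in `C` no proper induced substructure of
which satisfies `φ`. -/
def IsMinimalModel {L : FirstOrder.Language.{u, u}} [L.IsRelational] (C : Set (Struc L))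
    (φ : L.Sentence) (A : Struc L) : Prop :=
  A ∈ C ∧ A.carrier ⊨ φ ∧
    ∀ s : Set A.carrier,
      (letI := inducedStructure L s
       (↥s) ⊨ φ) → s = Set.univ

/-- Preservation under extensions holds over the class `D`: every sentence preserved under
extensions over `D` is equivalent over `D` to an existential sentence. -/
def PresExtHolds {L : FirstOrder.Language.{u, u}} [L.IsRelational]
    (D : Set (Struc L)) : Prop :=
  ∀ φ : L.Sentence, PreservedUnderExt D φ →
    ∃ (n : ℕ) (θ : L.Formula (Fin n)), θ.IsQF ∧
      ∀ S ∈ D, (S.carrier ⊨ φ ↔ ∃ a : Fin n → S.carrier, θ.Realize a)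

end Gaifman

open Gaifman

/-!
The sentence says of a structure that, if its hubs form a staircase, where a hub with `d > 0`
members comes directly after one with `d - 1` members, then there are hubs and none is marked.

Preservation: the neighborhood of a tuple in a finite structure is characterized up to isomorphism
by a local formula, so if `A ≼_{r,∞,k} B` then any two points of `A`, together with their neighbors,
have a copy in `B`. The axioms of staircases are universal statements about two points and their
neighbors; hence if `B` is a staircase, so is `A`. In finite staircases, hubs are determined by
their degrees. So the copies of the hubs of `A`, which have the degrees `0, …, t`, are exactly the
hubs of `B` of these degrees, and the last of them has no successor in `B` because it has none in
`A`. Therefore `B` has no other hubs, and all hubs of `B` are unmarked.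

Non-equivalence: if an existential local sentence holds in a long unmarked staircase, then some hub
is far away from all witnesses. Marking that hub does not change the neighborhood of the witnesses.
-/

namespace Gaifman

section Embeddings

variable {L : FirstOrder.Language.{u, u}} {M N : Type u} [L.Structure M] [L.Structure N]
  {f : M ↪[L] N} {x y : M} {r s k : ℕ} {a : Fin k → M}

lemma Adj.map (f : M ↪[L] N) (h : Adj L M x y) : Adj L N (f x) (f y) := by
  obtain ⟨hne, n, R, t, hR, ⟨i, rfl⟩, j, rfl⟩ := h
  exact ⟨f.injective.ne hne, n, R, f ∘ t, (f.map_rel R t).2 hR, ⟨i, rfl⟩, j, rfl⟩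

lemma CloseLE.mono (hrs : r ≤ s) (h : CloseLE L M r x y) : CloseLE L M s x y := by
  induction hrs with
  | refl => exact h
  | step _ ih => exact Or.inl ih

lemma CloseLE.map (f : M ↪[L] N) (h : CloseLE L M r x y) : CloseLE L N r (f x) (f y) := by
  induction r generalizing y with
  | zero => exact congrArg f h
  | succ r ih =>
    rcases h with h | ⟨z, hz, hzy⟩
    · exact Or.inl (ih h)
    · exact Or.inr ⟨f z, ih hz, hzy.map f⟩

/-- The image of the embedding `f` contains every Gaifman neighbor of `f x`, so that `f x` has the
same neighbors in `N` as `x` has in `M`. -/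
def CoversNbrs (f : M ↪[L] N) (x : M) : Prop :=
  ∀ ⦃z⦄, Adj L N (f x) z → z ∈ Set.range f

lemma coversNbrs_iff_range_subset :
    CoversNbrs f x ↔ ∀ ⦃n⦄ (R : L.Relations n) (t : Fin n → N), Structure.RelMap R t →
      f x ∈ Set.range t → Set.range t ⊆ Set.range f := by
  refine ⟨fun h n R t hR hx z hz => ?_, fun h z ⟨_, n, R, t, hR, hx, hz⟩ => h R t hR hx hz⟩
  by_cases hxz : f x = z
  · exact ⟨x, hxz⟩
  · exact h ⟨hxz, n, R, t, hR, hx, hz⟩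

lemma CoversNbrs.exists_relMap (h : CoversNbrs f x) {n : ℕ} {R : L.Relations n} {t : Fin n → N}
    (hR : Structure.RelMap R t) (hx : f x ∈ Set.range t) :
    ∃ t' : Fin n → M, f ∘ t' = t ∧ Structure.RelMap R t' := by
  choose t' ht' using fun i => coversNbrs_iff_range_subset.1 h R t hR hx ⟨i, rfl⟩
  obtain rfl : f ∘ t' = t := funext ht'
  exact ⟨t', rfl, (f.map_rel R t').1 hR⟩

lemma CoversNbrs.adj_of_map (h : CoversNbrs f x) (hxy : Adj L N (f x) (f y)) : Adj L M x y := by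
  obtain ⟨hne, n, R, t, hR, hx, hy⟩ := hxy
  obtain ⟨t', rfl, hR'⟩ := h.exists_relMap hR hx
  obtain ⟨i, hi⟩ := hx
  obtain ⟨j, hj⟩ := hy
  exact ⟨ne_of_apply_ne f hne, n, R, t', hR', ⟨i, f.injective hi⟩, j, f.injective hj⟩

lemma relMap_map₁ (f : M ↪[L] N) (R : L.Relations 1) (x : M) :
    Structure.RelMap R ![f x] ↔ Structure.RelMap R ![x] := by
  rw [← f.map_rel, show f ∘ ![x] = ![f x] from funext (Fin.forall_fin_one.2 rfl)]

lemma relMap_map₂ (f : M ↪[L] N) (R : L.Relations 2) (x y : M) :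
    Structure.RelMap R ![f x, f y] ↔ Structure.RelMap R ![x, y] := by
  rw [← f.map_rel, show f ∘ ![x, y] = ![f x, f y] from funext (Fin.forall_fin_two.2 ⟨rfl, rfl⟩)]

lemma CoversNbrs.mem_range_left (h : CoversNbrs f x) {R : L.Relations 2} {z : N}
    (hR : Structure.RelMap R ![z, f x]) : z ∈ Set.range f :=
  coversNbrs_iff_range_subset.1 h R _ hR ⟨1, rfl⟩ ⟨0, rfl⟩

lemma CoversNbrs.mem_range_right (h : CoversNbrs f x) {R : L.Relations 2} {z : N}
    (hR : Structure.RelMap R ![f x, z]) : z ∈ Set.range f :=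
  coversNbrs_iff_range_subset.1 h R _ hR ⟨0, rfl⟩ ⟨1, rfl⟩

/-- The embedding `f` covers the neighbors of every point at distance less than `r` from the tuple
`a`, so that it maps the `r`-neighborhood of `a` onto that of `f ∘ a`. -/
def IsFullOn (f : M ↪[L] N) (a : Fin k → M) (r : ℕ) : Prop :=
  ∀ i, ∀ s < r, ∀ x, CloseLE L M s (a i) x → CoversNbrs f x

lemma IsFullOn.exists_closeLE (h : IsFullOn f a r) {i : Fin k} {z : N} (hs : s ≤ r)
    (hz : CloseLE L N s (f (a i)) z) : ∃ x, f x = z ∧ CloseLE L M s (a i) x := by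
  induction s generalizing z with
  | zero => exact ⟨a i, hz, rfl⟩
  | succ s ih =>
    rcases hz with hz | ⟨w, hw, hwz⟩
    · obtain ⟨x, hx, hax⟩ := ih (by lia) hz
      exact ⟨x, hx, Or.inl hax⟩
    · obtain ⟨x, rfl, hax⟩ := ih (by lia) hw
      have hcov : CoversNbrs f x := h i s hs x hax
      obtain ⟨y, rfl⟩ := hcov hwz
      exact ⟨y, rfl, Or.inr ⟨x, hax, hcov.adj_of_map hwz⟩⟩

/-- Any two points of `M`, together with all their Gaifman neighbors, have a copy in `N`: some
structure embeds into both `M` and `N` and covers the neighbors of the points in question. -/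
def HasLocalCopies (L : FirstOrder.Language.{u, u}) (M N : Type u) [L.Structure M]
    [L.Structure N] : Prop :=
  ∀ x y : M, ∃ (S : Type u) (_ : L.Structure S) (f : S ↪[L] M) (g : S ↪[L] N) (u v : S),
    f u = x ∧ f v = y ∧ (CoversNbrs f u ∧ CoversNbrs g u) ∧ CoversNbrs f v ∧ CoversNbrs g v

end Embeddings

section Neighborhoods

variable {L : FirstOrder.Language.{u, u}} [L.IsRelational] {M N P : Type u} [L.Structure M]
  [L.Structure N] [L.Structure P] {r k : ℕ} {a : Fin k → M} {b : Fin k → N} {c : Fin k → P}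

/-- The neighborhood of a tuple carries the induced structure. -/
instance ballStructure (a : Fin k → M) (r : ℕ) : L.Structure (Ball L a r) :=
  inducedStructure L (Ball L a r)

/-- The tuple `a`, seen inside its own `r`-neighborhood. -/
def center (L : FirstOrder.Language.{u, u}) [L.Structure M] (a : Fin k → M) (r : ℕ) :
    Fin k → Ball L a r :=
  fun i => ⟨a i, self_mem_ball L a r i⟩

/-- The inclusion of the `r`-neighborhood of `a`, as an embedding of structures. -/
def ballInclusion (L : FirstOrder.Language.{u, u}) [L.IsRelational] [L.Structure M]
    (a : Fin k → M) (r : ℕ) : Ball L a r ↪[L] M where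
  toEmbedding := Function.Embedding.subtype _
  map_fun' g := isEmptyElim g
  map_rel' _ _ := Iff.rfl

lemma isFullOn_ballInclusion : IsFullOn (ballInclusion L a r) (center L a r) r := by
  intro i s hs x hx z hz
  have hsx : CloseLE L M s (a i) x := hx.map (ballInclusion L a r)
  have hsz : CloseLE L M (s + 1) (a i) z := Or.inr ⟨x, hsx, hz⟩
  exact ⟨⟨z, i, hsz.mono hs⟩, rfl⟩

/-- The `r`-neighborhoods of `a` and `b` are isomorphic, by an isomorphism taking `a` to `b`. -/
def NbhdIso (L : FirstOrder.Language.{u, u}) [L.IsRelational] [L.Structure M] [L.Structure N]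
    (r : ℕ) (a : Fin k → M) (b : Fin k → N) : Prop :=
  ∃ e : Ball L a r ≃[L] Ball L b r, e ∘ center L a r = center L b r

lemma NbhdIso.symm (h : NbhdIso L r a b) : NbhdIso L r b a := by
  obtain ⟨e, he⟩ := h
  refine ⟨e.symm, ?_⟩
  rw [← he, ← Function.comp_assoc]
  exact funext fun i => e.symm_apply_apply _

lemma NbhdIso.trans (h : NbhdIso L r a b) (h' : NbhdIso L r b c) : NbhdIso L r a c := by
  obtain ⟨e, he⟩ := h
  obtain ⟨e', he'⟩ := h'
  exact ⟨e'.comp e, by rw [← he', ← he]; rfl⟩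

lemma IsFullOn.nbhdIso {f : M ↪[L] N} (h : IsFullOn f a r) : NbhdIso L r a (f ∘ a) := by
  let g : Ball L a r → Ball L (f ∘ a) r :=
    fun x => ⟨f x, x.2.imp fun _ hx => hx.map f⟩
  have hg : Function.Bijective g := by
    refine ⟨fun x y hxy => Subtype.ext (f.injective (congrArg Subtype.val hxy)), ?_⟩
    rintro ⟨z, i, hz⟩
    obtain ⟨x, rfl, hx⟩ := h.exists_closeLE le_rfl hz
    exact ⟨⟨x, i, hx⟩, rfl⟩
  exact ⟨⟨Equiv.ofBijective g hg, fun F => isEmptyElim F, fun R t => f.map_rel R _⟩, rfl⟩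

lemma nbhdIso_center : NbhdIso L r (center L a r) a :=
  isFullOn_ballInclusion.nbhdIso

lemma nbhdIso_iff_exists_isFullOn :
    NbhdIso L r a b ↔
      ∃ f : Ball L a r ↪[L] N, IsFullOn f (center L a r) r ∧ f ∘ center L a r = b := by
  constructor
  · rintro ⟨e, he⟩
    refine ⟨(ballInclusion L b r).comp e.toEmbedding, fun i s hs x hx z hz => ?_, ?_⟩
    · have hex : CloseLE L (Ball L b r) s (center L b r i) (e x) := by
        rw [← he]
        exact hx.map e.toEmbedding
      obtain ⟨y, rfl⟩ := isFullOn_ballInclusion i s hs _ hex hz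
      exact ⟨e.symm y, congrArg (ballInclusion L b r) (e.apply_symm_apply y)⟩
    · exact congrArg (Subtype.val ∘ ·) he
  · rintro ⟨f, hf, rfl⟩
    exact nbhdIso_center.symm.trans hf.nbhdIso

lemma IsLocal.realize_iff {τ : L.Formula (Fin k)} (hτ : IsLocal r τ) (h : NbhdIso L r a b) :
    τ.Realize a ↔ τ.Realize b := by
  obtain ⟨e, he⟩ := h
  rw [hτ M a, hτ N b]
  change τ.Realize (center L a r) ↔ τ.Realize (center L b r)
  rw [← he, StrongHomClass.realize_formula]

end Neighborhoods

section Diagram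

variable {L : FirstOrder.Language.{u, u}} {M N : Type u} [L.Structure M] [L.Structure N]

open Classical in
/-- The formula `φ` if `p` holds, and its negation otherwise. -/
noncomputable def literal {α : Type*} (p : Prop) (φ : L.Formula α) : L.Formula α :=
  if p then φ else ∼φ

lemma realize_literal {α : Type*} {p : Prop} {φ : L.Formula α} {v : α → M} :
    (literal p φ).Realize v ↔ (φ.Realize v ↔ p) := by
  by_cases hp : p <;> simp [literal, hp]

variable [Finite (Σ n, L.Relations n)] [Finite M]

/-- The formula saying that its variables, which are the elements of `M`, are valued by an
embedding of `M`. -/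
noncomputable def embeddingFormula (L : FirstOrder.Language.{u, u}) (M : Type u) [L.Structure M]
    [Finite (Σ n, L.Relations n)] [Finite M] : L.Formula M :=
  Formula.iInf (fun p : M × M => literal (p.1 = p.2) ((Term.var p.1).equal (Term.var p.2))) ⊓
  Formula.iInf fun R : Σ n, L.Relations n => Formula.iInf fun t : Fin R.1 → M =>
    literal (Structure.RelMap R.2 t) (R.2.formula fun i => Term.var (t i))

lemma realize_embeddingFormula [L.IsRelational] {v : M → N} :
    (embeddingFormula L M).Realize v ↔ ∃ f : M ↪[L] N, f = v := by
  simp only [embeddingFormula, Formula.realize_inf, Formula.realize_iInf, realize_literal,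
    Formula.realize_equal, Formula.realize_rel, Term.realize_var, Prod.forall, Sigma.forall]
  constructor
  · rintro ⟨hinj, hrel⟩
    exact ⟨⟨⟨v, fun x y => (hinj x y).1⟩, fun F => isEmptyElim F, fun R t => hrel _ R t⟩, rfl⟩
  · rintro ⟨f, rfl⟩
    exact ⟨fun x y => f.injective.eq_iff, fun n R t => f.map_rel R t⟩

/-- The formula expressing `CoversNbrs f x` for the valuation `f` of its variables, which are the
elements of `M`. -/
noncomputable def coversNbrsFormula (x : M) : L.Formula M :=
  Formula.iInf fun R : Σ n, L.Relations n => Formula.iAlls (Fin R.1) <|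
    (R.2.formula fun i => Term.var (Sum.inr i)) ⟹
    (Formula.iSup fun i : Fin R.1 => (Term.var (Sum.inr i)).equal (Term.var (Sum.inl x))) ⟹
    Formula.iInf fun i : Fin R.1 => Formula.iSup fun y : M =>
      (Term.var (Sum.inl y)).equal (Term.var (Sum.inr i))

lemma realize_coversNbrsFormula {f : M ↪[L] N} {x : M} :
    (coversNbrsFormula (L := L) x).Realize f ↔ CoversNbrs f x := by
  simp [coversNbrsFormula, coversNbrs_iff_range_subset, Set.range_subset_iff, Sigma.forall]

end Diagram

section Characteristic

variable {L : FirstOrder.Language.{u, u}} [L.IsRelational] [Finite (Σ n, L.Relations n)]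
  {M N : Type u} [L.Structure M] [L.Structure N] [Finite M] {r k : ℕ} {a : Fin k → M}
  {b : Fin k → N}

/-- The characteristic formula of the `r`-neighborhood of `a`: its free variables `b` are the center
of a neighborhood isomorphic to that of `a`. -/
noncomputable def nbhdFormula (L : FirstOrder.Language.{u, u}) [L.IsRelational]
    [Finite (Σ n, L.Relations n)] [L.Structure M] (a : Fin k → M) (r : ℕ) : L.Formula (Fin k) :=
  Formula.iExs (Ball L a r) <|
    (embeddingFormula L (Ball L a r)).relabel Sum.inr ⊓
    (Formula.iInf fun x : {x // ∃ i, ∃ s < r, CloseLE L (Ball L a r) s (center L a r i) x} =>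
      (coversNbrsFormula x.1).relabel Sum.inr) ⊓
    Formula.iInf fun i => (Term.var (Sum.inr (center L a r i))).equal (Term.var (Sum.inl i))

lemma realize_nbhdFormula : (nbhdFormula L a r).Realize b ↔ NbhdIso L r a b := by
  rw [nbhdIso_iff_exists_isFullOn]
  simp only [nbhdFormula, Formula.realize_iExs, Formula.realize_inf, Formula.realize_relabel,
    Formula.realize_iInf, Formula.realize_equal, Term.realize_var, Sum.elim_comp_inr,
    realize_embeddingFormula, Sum.elim_inl, Sum.elim_inr]
  constructor
  · rintro ⟨_, ⟨⟨f, rfl⟩, hf⟩, hb⟩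
    exact ⟨f, fun i s hs x hx => realize_coversNbrsFormula.1 (hf ⟨x, i, s, hs, hx⟩), funext hb⟩
  · rintro ⟨f, hf, rfl⟩
    exact ⟨f, ⟨⟨f, rfl⟩, fun ⟨x, i, s, hs, hx⟩ => realize_coversNbrsFormula.2 (hf i s hs x hx)⟩,
      fun _ => rfl⟩

lemma isLocal_nbhdFormula : IsLocal r (nbhdFormula L a r) := by
  intro N _ b
  change (nbhdFormula L a r).Realize b ↔ (nbhdFormula L a r).Realize (center L b r)
  rw [realize_nbhdFormula, realize_nbhdFormula]
  exact ⟨fun h => h.trans nbhdIso_center.symm, fun h => h.trans nbhdIso_center⟩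

lemma exists_nbhdIso_of_locLE (h : ∀ q, LocLE L r q k M N) (a : Fin k → M) :
    ∃ b : Fin k → N, NbhdIso L r a b := by
  have ha : (nbhdFormula L a r).Realize a :=
    realize_nbhdFormula.2 (nbhdIso_center.symm.trans nbhdIso_center)
  obtain ⟨b, hb⟩ := h _ (nbhdFormula L a r) isLocal_nbhdFormula le_rfl ⟨a, ha⟩
  exact ⟨b, realize_nbhdFormula.1 hb⟩

lemma hasLocalCopies_of_locLE (hr : 1 ≤ r) (hk : 2 ≤ k) (h : ∀ q, LocLE L r q k M N) :
    HasLocalCopies L M N := by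
  intro x y
  let a : Fin k → M := fun i => if i.1 = 0 then x else y
  obtain ⟨b, hb⟩ := exists_nbhdIso_of_locLE h a
  obtain ⟨g, hg, -⟩ := nbhdIso_iff_exists_isFullOn.1 hb
  have covers (i : Fin k) : CoversNbrs (ballInclusion L a r) (center L a r i) ∧
      CoversNbrs g (center L a r i) :=
    ⟨isFullOn_ballInclusion i 0 hr _ rfl, hg i 0 hr _ rfl⟩
  exact ⟨Ball L a r, inferInstance, ballInclusion L a r, g, center L a r ⟨0, by lia⟩,
    center L a r ⟨1, by lia⟩, rfl, rfl, covers _, covers _⟩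

end Characteristic

end Gaifman

namespace Staircase

/-- The relation symbols. A `hub` stands for a natural number, written in unary as the number of its
`mem`bers; `succ` relates hubs of consecutive numbers, and also matches their members; a `mark` is
an extra color for hubs. -/
inductive Symbol : ℕ → Type
  | hub : Symbol 1
  | mark : Symbol 1
  | mem : Symbol 2
  | succ : Symbol 2

/-- The finite relational signature with relation symbols `Symbol`. -/
def lang : FirstOrder.Language.{0, 0} := ⟨fun _ => Empty, Symbol⟩

instance : lang.IsRelational := fun _ => inferInstanceAs (IsEmpty Empty)

instance : Finite (Σ n, lang.Relations n) :=
  Finite.of_surjective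
    (![⟨1, .hub⟩, ⟨1, .mark⟩, ⟨2, .mem⟩, ⟨2, .succ⟩] : Fin 4 → Σ n, Symbol n) <| by
    rintro ⟨_, _ | _ | _ | _⟩
    exacts [⟨0, rfl⟩, ⟨1, rfl⟩, ⟨2, rfl⟩, ⟨3, rfl⟩]

section Predicates

variable {M : Type} [lang.Structure M]

/-- The interpretation of the symbol `hub`. -/
def Hub (x : M) : Prop :=
  Structure.RelMap (L := lang) Symbol.hub ![x]

/-- The interpretation of the symbol `mark`. -/
def Mark (x : M) : Prop :=
  Structure.RelMap (L := lang) Symbol.mark ![x]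

/-- The interpretation of the symbol `mem`: the hub `x` has the member `e`. -/
def Mem (x e : M) : Prop :=
  Structure.RelMap (L := lang) Symbol.mem ![x, e]

/-- The interpretation of the symbol `succ`. -/
def Succ (x y : M) : Prop :=
  Structure.RelMap (L := lang) Symbol.succ ![x, y]

/-- The hub `y` comes directly after the hub `x`. -/
def Next (x y : M) : Prop :=
  Hub x ∧ Hub y ∧ Succ x y

/-- The number of members of `x`, or `0` if there are infinitely many. -/
noncomputable def deg (x : M) : ℕ :=
  {e | Mem x e}.ncard

/-- `Succ` is a bijection from the members of `x` to all but one of the members of `y`. This is how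
first-order logic, looking only at neighbors of `x` and `y`, can express `deg y = deg x + 1`. -/
def AddsOne (x y : M) : Prop :=
  ∃ z, Mem y z ∧ (∀ e, Mem x e → ∃! e', Mem y e' ∧ e' ≠ z ∧ Succ e e') ∧
    ∀ e', Mem y e' → e' ≠ z → ∃! e, Mem x e ∧ Succ e e'

end Predicates

/-- The hubs of `M` form a staircase: every hub with members comes directly after another one, which
has one member less. Each axiom is about at most two points and their Gaifman neighbors. -/
structure IsStaircase (M : Type) [lang.Structure M] : Prop where
  exists_pred (x : M) : Hub x → (∃ e, Mem x e) → ∃ w, Next w x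
  next_unique (x w w' : M) : Next x w → Next x w' → w = w'
  base_unique (x y : M) : Hub x → Hub y → (¬∃ e, Mem x e) → (¬∃ e, Mem y e) → x = y
  addsOne (x y : M) : Next x y → AddsOne x y

/-- The property of `M` expressed by the sentence that witnesses the failure. -/
def UnmarkedIfStaircase (M : Type) [lang.Structure M] : Prop :=
  IsStaircase M → (∃ x : M, Hub x) ∧ ∀ x : M, Hub x → ¬Mark x

section Sentence

variable {M : Type} [lang.Structure M] {n : ℕ}

/-- `Hub` as a formula in the bound variable `i`. -/
def hubF (i : Fin n) : lang.BoundedFormula Empty n :=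
  Relations.boundedFormula₁ (L := lang) Symbol.hub (&i)

/-- `Mark` as a formula in the bound variable `i`. -/
def markF (i : Fin n) : lang.BoundedFormula Empty n :=
  Relations.boundedFormula₁ (L := lang) Symbol.mark (&i)

/-- `Mem` as a formula in the bound variables `i` and `j`. -/
def memF (i j : Fin n) : lang.BoundedFormula Empty n :=
  Relations.boundedFormula₂ (L := lang) Symbol.mem (&i) (&j)

/-- `Succ` as a formula in the bound variables `i` and `j`. -/
def succF (i j : Fin n) : lang.BoundedFormula Empty n :=
  Relations.boundedFormula₂ (L := lang) Symbol.succ (&i) (&j)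

/-- `Next` as a formula in the bound variables `i` and `j`. -/
def nextF (i j : Fin n) : lang.BoundedFormula Empty n :=
  hubF i ⊓ hubF j ⊓ succF i j

/-- `AddsOne` as a formula in the bound variables `0` and `1`. -/
def addsOneF : lang.BoundedFormula Empty 2 :=
  ∃' (memF 1 2 ⊓
    (∀' (memF 0 3 ⟹ ∃' (memF 1 4 ⊓ ∼(&4 =' &2) ⊓ succF 3 4 ⊓
      ∀' (memF 1 5 ⊓ ∼(&5 =' &2) ⊓ succF 3 5 ⟹ &5 =' &4)))) ⊓
    ∀' (memF 1 3 ⟹ ∼(&3 =' &2) ⟹ ∃' (memF 0 4 ⊓ succF 4 3 ⊓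
      ∀' (memF 0 5 ⊓ succF 5 3 ⟹ &5 =' &4))))

/-- `IsStaircase` as a sentence. -/
def staircaseF : lang.Sentence :=
  (∀' (hubF 0 ⟹ (∃' memF 0 1) ⟹ ∃' nextF 1 0)) ⊓
  (∀' ∀' ∀' (nextF 0 1 ⟹ nextF 0 2 ⟹ &1 =' &2)) ⊓
  (∀' ∀' (hubF 0 ⟹ hubF 1 ⟹ ∼(∃' memF 0 2) ⟹ ∼(∃' memF 1 2) ⟹ &0 =' &1)) ⊓
  ∀' ∀' (nextF 0 1 ⟹ addsOneF)

/-- `UnmarkedIfStaircase` as a sentence. -/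
def unmarkedIfStaircaseF : lang.Sentence :=
  staircaseF ⟹ ((∃' hubF 0) ⊓ ∀' (hubF 0 ⟹ ∼(markF 0)))

variable {v : Empty → M} {xs : Fin n → M} {i j : Fin n}

lemma realize_hubF : (hubF i).Realize v xs ↔ Hub (xs i) := BoundedFormula.realize_rel₁

lemma realize_markF : (markF i).Realize v xs ↔ Mark (xs i) := BoundedFormula.realize_rel₁

lemma realize_memF : (memF i j).Realize v xs ↔ Mem (xs i) (xs j) := BoundedFormula.realize_rel₂

lemma realize_succF : (succF i j).Realize v xs ↔ Succ (xs i) (xs j) := BoundedFormula.realize_rel₂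

lemma realize_nextF : (nextF i j).Realize v xs ↔ Next (xs i) (xs j) := by
  simp only [nextF, Next, BoundedFormula.realize_inf, realize_hubF, realize_succF, and_assoc]

lemma realize_addsOneF {x y : M} :
    addsOneF.Realize v (Fin.snoc (Fin.snoc default x) y) ↔ AddsOne x y := by
  simp [addsOneF, AddsOne, realize_memF, realize_succF, ExistsUnique, Fin.snoc, and_assoc]

lemma models_staircaseF : M ⊨ staircaseF ↔ IsStaircase M := by
  have hconj : M ⊨ staircaseF ↔
      (∀ x : M, Hub x → (∃ e, Mem x e) → ∃ w, Next w x) ∧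
      (∀ x w w' : M, Next x w → Next x w' → w = w') ∧
      (∀ x y : M, Hub x → Hub y → (¬∃ e, Mem x e) → (¬∃ e, Mem y e) → x = y) ∧
      ∀ x y : M, Next x y → AddsOne x y := by
    simp [staircaseF, Sentence.Realize, Formula.Realize, realize_hubF, realize_memF, realize_nextF,
      realize_addsOneF, Fin.snoc, and_assoc]
  exact hconj.trans ⟨fun ⟨hpred, hnext, hbase, hadd⟩ => ⟨hpred, hnext, hbase, hadd⟩,
    fun h => ⟨h.exists_pred, h.next_unique, h.base_unique, h.addsOne⟩⟩

lemma models_unmarkedIfStaircaseF : M ⊨ unmarkedIfStaircaseF ↔ UnmarkedIfStaircase M := by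
  rw [UnmarkedIfStaircase, ← models_staircaseF]
  simp [unmarkedIfStaircaseF, Sentence.Realize, Formula.Realize, realize_hubF, realize_markF,
    Fin.snoc]

end Sentence

section Transfer

variable {S M : Type} [lang.Structure S] [lang.Structure M] {f : S ↪[lang] M} {x y : S}

lemma hub_map (f : S ↪[lang] M) {x : S} : Hub (f x) ↔ Hub x :=
  relMap_map₁ f _ x

lemma mark_map (f : S ↪[lang] M) {x : S} : Mark (f x) ↔ Mark x :=
  relMap_map₁ f _ x

lemma mem_map (f : S ↪[lang] M) {x y : S} : Mem (f x) (f y) ↔ Mem x y :=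
  relMap_map₂ f _ x y

lemma succ_map (f : S ↪[lang] M) {x y : S} : Succ (f x) (f y) ↔ Succ x y :=
  relMap_map₂ f _ x y

lemma next_map (f : S ↪[lang] M) {x y : S} : Next (f x) (f y) ↔ Next x y := by
  simp only [Next, hub_map, succ_map]

lemma exists_mem_and_map (hf : CoversNbrs f x) {p : M → Prop} :
    (∃ e, Mem (f x) e ∧ p e) ↔ ∃ e, Mem x e ∧ p (f e) := by
  constructor
  · rintro ⟨e, he, hp⟩
    obtain ⟨e, rfl⟩ := hf.mem_range_right he
    exact ⟨e, (mem_map f).1 he, hp⟩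
  · rintro ⟨e, he, hp⟩
    exact ⟨f e, (mem_map f).2 he, hp⟩

lemma forall_mem_map (hf : CoversNbrs f x) {p : M → Prop} :
    (∀ e, Mem (f x) e → p e) ↔ ∀ e, Mem x e → p (f e) := by
  simpa using (exists_mem_and_map hf (p := fun e => ¬p e)).not

lemma existsUnique_mem_map (hf : CoversNbrs f x) {p : M → Prop} :
    (∃! e, Mem (f x) e ∧ p e) ↔ ∃! e, Mem x e ∧ p (f e) := by
  simp only [ExistsUnique, and_assoc, and_imp, exists_mem_and_map hf, forall_mem_map hf,
    f.injective.eq_iff]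

lemma exists_mem_map (hf : CoversNbrs f x) : (∃ e, Mem (f x) e) ↔ ∃ e, Mem x e := by
  simpa only [and_true] using exists_mem_and_map hf (p := fun _ => True)

lemma exists_next_map (hf : CoversNbrs f x) : (∃ w, Next (f x) w) ↔ ∃ w, Next x w := by
  refine ⟨fun ⟨w, hw⟩ => ?_, fun ⟨w, hw⟩ => ⟨f w, (next_map f).2 hw⟩⟩
  obtain ⟨w, rfl⟩ := hf.mem_range_right hw.2.2
  exact ⟨w, (next_map f).1 hw⟩

lemma exists_pred_map (hf : CoversNbrs f x) : (∃ w, Next w (f x)) ↔ ∃ w, Next w x := by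
  refine ⟨fun ⟨w, hw⟩ => ?_, fun ⟨w, hw⟩ => ⟨f w, (next_map f).2 hw⟩⟩
  obtain ⟨w, rfl⟩ := hf.mem_range_left hw.2.2
  exact ⟨w, (next_map f).1 hw⟩

lemma addsOne_map (hf : CoversNbrs f x) (hf' : CoversNbrs f y) :
    AddsOne (f x) (f y) ↔ AddsOne x y := by
  simp only [AddsOne, exists_mem_and_map hf', forall_mem_map hf, forall_mem_map hf',
    existsUnique_mem_map hf, existsUnique_mem_map hf', f.injective.ne_iff, succ_map]

lemma deg_map (hf : CoversNbrs f x) : deg (f x) = deg x := by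
  rw [deg, deg, ← Set.ncard_image_of_injective _ f.injective]
  congr 1
  ext e
  simpa [eq_comm] using exists_mem_and_map hf (p := (· = e))

end Transfer

section LocalCopies

variable {M N : Type} [lang.Structure M] [lang.Structure N]

lemma IsStaircase.of_hasLocalCopies (h : HasLocalCopies lang M N) (hN : IsStaircase N) :
    IsStaircase M where
  exists_pred x := by
    obtain ⟨S, _, f, g, u, -, rfl, -, ⟨hf, hg⟩, -⟩ := h x x
    simpa only [hub_map, exists_mem_map hf, exists_mem_map hg, exists_pred_map hf,
      exists_pred_map hg] using hN.exists_pred (g u)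
  next_unique x w w' hw hw' := by
    obtain ⟨S, _, f, g, u, -, rfl, -, ⟨hf, -⟩, -⟩ := h x x
    obtain ⟨w, rfl⟩ := hf.mem_range_right hw.2.2
    obtain ⟨w', rfl⟩ := hf.mem_range_right hw'.2.2
    rw [next_map] at hw hw'
    exact congrArg f (g.injective (hN.next_unique _ _ _ ((next_map g).2 hw) ((next_map g).2 hw')))
  base_unique x y := by
    obtain ⟨S, _, f, g, u, v, rfl, rfl, ⟨hf, hg⟩, hf', hg'⟩ := h x y
    simpa only [hub_map, exists_mem_map hf, exists_mem_map hg, exists_mem_map hf',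
      exists_mem_map hg', f.injective.eq_iff, g.injective.eq_iff] using
      hN.base_unique (g u) (g v)
  addsOne x y := by
    obtain ⟨S, _, f, g, u, v, rfl, rfl, ⟨hf, hg⟩, hf', hg'⟩ := h x y
    simpa only [next_map, addsOne_map hf hf', addsOne_map hg hg'] using hN.addsOne (g u) (g v)

lemma exists_copy (h : HasLocalCopies lang M N) (x : M) :
    ∃ y : N, (Hub y ↔ Hub x) ∧ (Mark y ↔ Mark x) ∧ deg y = deg x ∧
      ((∃ w, Next y w) ↔ ∃ w, Next x w) := by
  obtain ⟨S, _, f, g, u, -, rfl, -, ⟨hf, hg⟩, -⟩ := h x x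
  exact ⟨g u, by simp only [hub_map, mark_map, deg_map hf, deg_map hg, exists_next_map hf,
    exists_next_map hg, and_self]⟩

end LocalCopies

section Finite

lemma ncard_eq_of_existsUnique {α β : Type*} {s : Set α} {t : Set β} {R : α → β → Prop}
    (hs : ∀ a ∈ s, ∃! b, b ∈ t ∧ R a b) (ht : ∀ b ∈ t, ∃! a, a ∈ s ∧ R a b) :
    s.ncard = t.ncard := by
  refine Set.ncard_congr (fun a ha => (hs a ha).choose) (fun a ha => (hs a ha).choose_spec.1.1)
    (fun a a' ha ha' h => ?_) (fun b hb => ?_)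
  · obtain ⟨hb, hab⟩ := (hs a ha).choose_spec.1
    exact (ht _ hb).unique ⟨ha, hab⟩ ⟨ha', h ▸ (hs a' ha').choose_spec.1.2⟩
  · obtain ⟨a, ⟨ha, hab⟩, -⟩ := ht b hb
    exact ⟨a, ha, (hs a ha).unique (hs a ha).choose_spec.1 ⟨hb, hab⟩⟩

variable {M : Type} [lang.Structure M] [Finite M] {x y : M}

lemma AddsOne.deg_eq (h : AddsOne x y) : deg y = deg x + 1 := by
  obtain ⟨z, hz, hsucc, hpred⟩ := h
  have hcard : {e | Mem x e}.ncard = ({e' | Mem y e'} \ {z}).ncard :=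
    ncard_eq_of_existsUnique (R := Succ)
      (fun e he => by
        simpa only [Set.mem_sdiff, Set.mem_singleton_iff, Set.mem_ofPred_eq, and_assoc]
          using hsucc e he)
      fun e' he' => hpred e' he'.1 he'.2
  have hz' : z ∈ {e' | Mem y e'} := hz
  rw [deg, deg, hcard, Set.ncard_sdiff_singleton_add_one hz']

lemma exists_mem_iff_deg_ne_zero : (∃ e, Mem x e) ↔ deg x ≠ 0 :=
  (Set.ncard_pos (Set.toFinite _)).symm.trans Nat.pos_iff_ne_zero

namespace IsStaircase

lemma deg_eq (hM : IsStaircase M) (h : Next x y) : deg y = deg x + 1 :=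
  (hM.addsOne x y h).deg_eq

lemma exists_next_of_deg_eq_succ (hM : IsStaircase M) (hy : Hub y) {m : ℕ} (hm : deg y = m + 1) :
    ∃ x, Next x y ∧ deg x = m := by
  obtain ⟨x, hxy⟩ := hM.exists_pred y hy (exists_mem_iff_deg_ne_zero.2 (by lia))
  exact ⟨x, hxy, by have := hM.deg_eq hxy; lia⟩

lemma eq_of_deg_eq (hM : IsStaircase M) (hx : Hub x) (hy : Hub y) (hxy : deg x = deg y) :
    x = y := by
  induction hm : deg x generalizing x y with
  | zero =>
    exact hM.base_unique x y hx hy (by simp [exists_mem_iff_deg_ne_zero, hm])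
      (by simp [exists_mem_iff_deg_ne_zero, ← hxy, hm])
  | succ m ih =>
    obtain ⟨w, hwx, hw⟩ := hM.exists_next_of_deg_eq_succ hx hm
    obtain ⟨w', hwy, hw'⟩ := hM.exists_next_of_deg_eq_succ hy (hxy ▸ hm)
    obtain rfl : w = w' := ih hwx.1 hwy.1 (hw.trans hw'.symm) hw
    exact hM.next_unique w x y hwx hwy

lemma exists_next_of_lt_deg (hM : IsStaircase M) (hx : Hub x) {m : ℕ} (hm : m < deg x) :
    ∃ y w : M, Next y w ∧ deg y = m := by
  induction hd : deg x generalizing x with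
  | zero => lia
  | succ d ih =>
    obtain ⟨w, hwx, hw⟩ := hM.exists_next_of_deg_eq_succ hx hd
    rcases eq_or_ne m d with rfl | hne
    · exact ⟨w, x, hwx, hw⟩
    · exact ih hwx.1 (by lia) hw

lemma exists_hub_deg_eq (hM : IsStaircase M) (hx : Hub x) {m : ℕ} (hm : m ≤ deg x) :
    ∃ y : M, Hub y ∧ deg y = m := by
  rcases hm.eq_or_lt with rfl | hlt
  · exact ⟨x, hx, rfl⟩
  · obtain ⟨y, w, hyw, hy⟩ := hM.exists_next_of_lt_deg hx hlt
    exact ⟨y, hyw.1, hy⟩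

end IsStaircase

theorem UnmarkedIfStaircase.of_hasLocalCopies {N : Type} [lang.Structure N] [Finite N]
    (hM : UnmarkedIfStaircase M) (h : HasLocalCopies lang M N) : UnmarkedIfStaircase N := by
  intro hN
  have hMst : IsStaircase M := .of_hasLocalCopies h hN
  obtain ⟨hne, hunmarked⟩ := hM hMst
  obtain ⟨t, ht, htmax⟩ := Set.exists_max_image {x : M | Hub x} deg (Set.toFinite _) hne
  have htop : ¬∃ w, Next t w := fun ⟨w, hw⟩ => by
    have := htmax w hw.2.1
    have := hMst.deg_eq hw
    lia
  obtain ⟨t', ht'hub, -, ht'deg, ht'next⟩ := exists_copy h t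
  refine ⟨⟨t', ht'hub.2 ht⟩, fun b hb hbmark => ?_⟩
  rcases le_or_gt (deg b) (deg t) with hle | hlt
  · obtain ⟨x, hx, hxb⟩ := hMst.exists_hub_deg_eq ht hle
    obtain ⟨x', hx'hub, hx'mark, hx'deg, -⟩ := exists_copy h x
    obtain rfl : x' = b := hN.eq_of_deg_eq (hx'hub.2 hx) hb (hx'deg.trans hxb)
    exact hunmarked x hx (hx'mark.1 hbmark)
  · obtain ⟨y, w, hyw, hy⟩ := hN.exists_next_of_lt_deg hb hlt
    obtain rfl : y = t' := hN.eq_of_deg_eq hyw.1 (ht'hub.2 ht) (hy.trans ht'deg.symm)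
    exact htop (ht'next.1 ⟨w, hyw⟩)

end Finite

/-- The elements of the standard model with the given set of columns: column `c` consists of a hub,
in row `0`, and of its `c` members, in rows `1` to `c`. The hubs of the columns in `marked` are
marked. -/
@[ext]
structure Cell (cols marked : Set ℕ) where
  col : ℕ
  row : ℕ
  row_le_col : row ≤ col
  col_mem : col ∈ cols

variable {cols cols' marked marked' : Set ℕ}

/-- The standard model. The symbol `succ` joins the cells of a column to those of the next one, row
by row. -/
instance : lang.Structure (Cell cols marked) where
  funMap := Empty.elim
  RelMap R := match R with
    | .hub => fun t => (t 0).row = 0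
    | .mark => fun t => (t 0).row = 0 ∧ (t 0).col ∈ marked
    | .mem => fun t => (t 0).row = 0 ∧ (t 1).row ≠ 0 ∧ (t 1).col = (t 0).col
    | .succ => fun t => (t 1).col = (t 0).col + 1 ∧ (t 1).row = (t 0).row

namespace Cell

lemma hub_iff {x : Cell cols marked} : Hub x ↔ x.row = 0 := Iff.rfl

lemma mem_iff {x e : Cell cols marked} : Mem x e ↔ x.row = 0 ∧ e.row ≠ 0 ∧ e.col = x.col := Iff.rfl

lemma succ_iff {x y : Cell cols marked} : Succ x y ↔ y.col = x.col + 1 ∧ y.row = x.row := Iff.rfl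

lemma finite (hcols : cols.Finite) : Finite (Cell cols marked) := by
  have := hcols.to_subtype
  obtain ⟨n, hn⟩ := hcols.bddAbove
  let code (x : Cell cols marked) : cols × Fin (n + 1) :=
    (⟨x.col, x.col_mem⟩, ⟨x.row, by have := hn x.col_mem; have := x.row_le_col; lia⟩)
  exact Finite.of_injective code fun x y h => by
    simp only [code, Prod.mk.injEq, Subtype.mk.injEq, Fin.mk.injEq] at h
    exact Cell.ext h.1 h.2

lemma next_iff {x y : Cell cols marked} : Next x y ↔ x.row = 0 ∧ y.row = 0 ∧ y.col = x.col + 1 := by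
  rw [Next, hub_iff, hub_iff, succ_iff]; lia

lemma addsOne_of_next {x y : Cell cols marked} (h : Next x y) : AddsOne x y := by
  rw [next_iff] at h
  obtain ⟨hx, hy, hxy⟩ := h
  let top : Cell cols marked := ⟨y.col, y.col, le_rfl, y.col_mem⟩
  refine ⟨top, ⟨hy, by simp [top, hxy], rfl⟩, fun e he => ?_, fun e he hne => ?_⟩
  · obtain ⟨-, he0, hec⟩ := mem_iff.1 he
    have hrow : e.row < y.col := by have := e.row_le_col; lia
    have hcol : y.col = e.col + 1 := hec ▸ hxy
    refine ⟨⟨y.col, e.row, hrow.le, y.col_mem⟩, ⟨⟨hy, he0, rfl⟩, ?_, hcol, rfl⟩, ?_⟩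
    · exact fun h => hrow.ne (congrArg row h)
    · rintro e' ⟨he', -, hee'⟩
      exact Cell.ext he'.2.2 hee'.2
  · obtain ⟨-, he0, hec⟩ := mem_iff.1 he
    have hrow : e.row ≤ x.col := by
      have := e.row_le_col
      have : e.row ≠ y.col := fun h => hne (Cell.ext hec h)
      lia
    refine ⟨⟨x.col, e.row, hrow, x.col_mem⟩, ⟨⟨hx, he0, rfl⟩, hec.trans hxy, rfl⟩, ?_⟩
    rintro e' ⟨he', hee'⟩
    exact Cell.ext he'.2.2 hee'.2.symm

lemma isStaircase (hcols : IsLowerSet cols) : IsStaircase (Cell cols marked) where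
  exists_pred x hx := by
    rintro ⟨e, he⟩
    obtain ⟨-, he0, hex⟩ := mem_iff.1 he
    have hpos : x.col = x.col - 1 + 1 := by have := e.row_le_col; lia
    exact ⟨⟨x.col - 1, 0, Nat.zero_le _, hcols (Nat.sub_le _ _) x.col_mem⟩,
      next_iff.2 ⟨rfl, hx, hpos⟩⟩
  next_unique x w w' hw hw' := by
    rw [next_iff] at hw hw'
    exact Cell.ext (by lia) (by lia)
  base_unique x y hx hy hx' hy' := by
    have col_eq_zero (z : Cell cols marked) (hz : Hub z) (hz' : ¬∃ e, Mem z e) : z.col = 0 := by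
      by_contra h
      exact hz' ⟨⟨z.col, z.col, le_rfl, z.col_mem⟩, hz, h, rfl⟩
    exact Cell.ext ((col_eq_zero x hx hx').trans (col_eq_zero y hy hy').symm) (hx.trans hy.symm)
  addsOne _ _ := addsOne_of_next

lemma col_le_of_adj {x y : Cell cols marked} (h : Adj lang (Cell cols marked) x y) :
    y.col ≤ x.col + 1 ∧ x.col ≤ y.col + 1 := by
  obtain ⟨-, n, R, t, hR, ⟨i, rfl⟩, ⟨j, rfl⟩⟩ := h
  have hcol : ∀ i j, (t j).col ≤ (t i).col + 1 := by
    cases R with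
    | hub | mark => exact fun i j => Subsingleton.elim i j ▸ Nat.le_succ _
    | mem =>
      have : (t 1).col = (t 0).col := hR.2.2
      simp only [Fin.forall_fin_two]
      lia
    | succ =>
      have : (t 1).col = (t 0).col + 1 := hR.1
      simp only [Fin.forall_fin_two]
      lia
  exact ⟨hcol i j, hcol j i⟩

lemma col_le_of_closeLE {s : ℕ} {x y : Cell cols marked}
    (h : CloseLE lang (Cell cols marked) s x y) :
    y.col ≤ x.col + s ∧ x.col ≤ y.col + s := by
  induction s generalizing y with
  | zero => obtain rfl : x = y := h; lia
  | succ s ih =>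
    rcases h with h | ⟨z, hxz, hzy⟩
    · have := ih h; lia
    · have := ih hxz
      have := col_le_of_adj hzy
      lia

/-- The inclusion of a standard model into one with more columns, where the common columns have the
same marks. -/
def inclusion (hcols : cols ⊆ cols') (hmarked : ∀ c ∈ cols, c ∈ marked ↔ c ∈ marked') :
    Cell cols marked ↪[lang] Cell cols' marked' where
  toFun x := ⟨x.col, x.row, x.row_le_col, hcols x.col_mem⟩
  inj' _ _ h := Cell.ext (Cell.ext_iff.1 h).1 (Cell.ext_iff.1 h).2
  map_fun' F := isEmptyElim F
  map_rel' R t := by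
    cases R with
    | hub | mem | succ => exact Iff.rfl
    | mark => exact and_congr_right fun _ => (hmarked _ (t 0).col_mem).symm

lemma isFullOn_inclusion {hcols : cols ⊆ cols'}
    {hmarked : ∀ c ∈ cols, c ∈ marked ↔ c ∈ marked'} {k r : ℕ} {a : Fin k → Cell cols marked}
    (ha : ∀ i, ∀ c ∈ cols', c ≤ (a i).col + r → (a i).col ≤ c + r → c ∈ cols) :
    IsFullOn (inclusion hcols hmarked) a r := by
  intro i s hs x hx z hz
  have hax := col_le_of_closeLE hx
  have hxz := col_le_of_adj hz
  change z.col ≤ x.col + 1 ∧ x.col ≤ z.col + 1 at hxz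
  exact ⟨⟨z.col, z.row, z.row_le_col, ha i _ z.col_mem (by lia) (by lia)⟩, rfl⟩

lemma unmarkedIfStaircase_empty (hcols : cols.Nonempty) : UnmarkedIfStaircase (Cell cols ∅) := by
  obtain ⟨c, hc⟩ := hcols
  exact fun _ => ⟨⟨⟨c, 0, c.zero_le, hc⟩, rfl⟩, fun _ _ hx => hx.2⟩

lemma not_unmarkedIfStaircase (hcols : IsLowerSet cols) {g : ℕ} (hg : g ∈ cols)
    (hgmarked : g ∈ marked) : ¬UnmarkedIfStaircase (Cell cols marked) :=
  fun h => (h (isStaircase hcols)).2 ⟨g, 0, g.zero_le, hg⟩ rfl ⟨rfl, hgmarked⟩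

end Cell

lemma exists_far_from_all {k r : ℕ} (p : Fin k → ℕ) :
    ∃ g ≤ k * (2 * r + 1), ∀ i, ¬(g ≤ p i + r ∧ p i ≤ g + r) := by
  let blocked : Finset ℕ := Finset.univ.biUnion fun i => Finset.Icc (p i - r) (p i + r)
  have hcard : blocked.card < (Finset.range (k * (2 * r + 1) + 1)).card := by
    calc blocked.card ≤ (Finset.univ : Finset (Fin k)).card * (2 * r + 1) :=
          Finset.card_biUnion_le_card_mul _ _ _ fun i _ => by simp; lia
      _ < _ := by simp
  obtain ⟨g, hg, hg'⟩ := Finset.exists_mem_notMem_of_card_lt_card hcard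
  refine ⟨g, by simpa [Nat.lt_succ_iff] using hg, fun i hi => hg' ?_⟩
  exact Finset.mem_biUnion.2 ⟨i, Finset.mem_univ i, Finset.mem_Icc.2 (by lia)⟩

theorem not_exists_isLocal_unmarkedIfStaircase_iff :
    ¬∃ (k r : ℕ) (τ : lang.Formula (Fin k)), IsLocal r τ ∧
      ∀ (M : Type) [lang.Structure M], Finite M →
        (UnmarkedIfStaircase M ↔ ∃ a : Fin k → M, τ.Realize a) := by
  rintro ⟨k, r, τ, hτ, h⟩
  let cols := Set.Iic (k * (2 * r + 1))
  have hfin (marked : Set ℕ) : Finite (Cell cols marked) := Cell.finite (Set.finite_Iic _)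
  obtain ⟨a, ha⟩ := (h _ (hfin ∅)).1 (Cell.unmarkedIfStaircase_empty Set.nonempty_Iic)
  obtain ⟨g, hg, hfar⟩ := exists_far_from_all (r := r) fun i => (a i).col
  have hmem (i : Fin k) (c : ℕ) (hc : c ∈ cols) (h₁ : c ≤ (a i).col + r)
      (h₂ : (a i).col ≤ c + r) : c ∈ cols \ {g} :=
    ⟨hc, fun hcg => hfar i (hcg ▸ ⟨h₁, h₂⟩)⟩
  let a' (i : Fin k) : Cell (cols \ {g}) ∅ :=
    ⟨(a i).col, (a i).row, (a i).row_le_col, hmem i _ (a i).col_mem (by lia) (by lia)⟩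
  have hA : NbhdIso lang r a' a :=
    (Cell.isFullOn_inclusion (hcols := Set.sdiff_subset) (hmarked := fun _ _ => Iff.rfl)
      hmem).nbhdIso
  have hB := (Cell.isFullOn_inclusion (a := a') (marked' := {g}) (hcols := Set.sdiff_subset)
    (hmarked := fun c hc => iff_of_false (Set.notMem_empty c) hc.2) hmem).nbhdIso
  have hτB := (hτ.realize_iff (hA.symm.trans hB)).1 ha
  exact Cell.not_unmarkedIfStaircase (isLowerSet_Iic _) hg (Set.mem_singleton g)
    ((h _ (hfin {g})).2 ⟨_, hτB⟩)

end Staircase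

theorem failure_at_arbitrary_quantifier_rank_general :
    ∃ (L : FirstOrder.Language.{0, 0}) (rel : L.IsRelational),
      Finite (Σ n, L.Relations n) ∧
      (letI := rel
       ∃ φ : L.Sentence,
          (∀ r k : ℕ, 1 ≤ r → 2 ≤ k →
            ∀ (A B : Type) [L.Structure A] [L.Structure B], Finite A → Finite B →
              A ⊨ φ → (∀ q : ℕ, LocLE L r q k A B) → B ⊨ φ) ∧
          ¬ ∃ (k' r' : ℕ) (τ : L.Formula (Fin k')), IsLocal r' τ ∧
              ∀ (M : Type) [L.Structure M], Finite M →
                (M ⊨ φ ↔ ∃ a : Fin k' → M, τ.Realize a)) := by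
  refine ⟨Staircase.lang, inferInstance, inferInstance, Staircase.unmarkedIfStaircaseF, ?_, ?_⟩
  · intro r k hr hk A B _ _ _ _ hA hAB
    rw [Staircase.models_unmarkedIfStaircaseF] at hA ⊢
    exact hA.of_hasLocalCopies (hasLocalCopies_of_locLE hr hk hAB)
  · simpa only [Staircase.models_unmarkedIfStaircaseF] using
      Staircase.not_exists_isLocal_unmarkedIfStaircase_iff

/-- **Failure at arbitrary quantifier rank.** There is a finite relational signature such that
for every `r ≥ 1` and `k ≥ 2` there is a sentence preserved under `≼_{r,∞,k}` over the class
of all finite structures which is not equivalent over that class to any existential local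
sentence. -/
theorem failure_at_arbitrary_quantifier_rank :
    ∃ (L : FirstOrder.Language.{0, 0}) (rel : L.IsRelational),
      Finite (Σ n, L.Relations n) ∧
      (letI := rel
       ∀ r k : ℕ, 1 ≤ r → 2 ≤ k →
        ∃ φ : L.Sentence,
          (∀ (A B : Type) [L.Structure A] [L.Structure B], Finite A → Finite B →
            A ⊨ φ → (∀ q : ℕ, LocLE L r q k A B) → B ⊨ φ) ∧
          ¬ ∃ (k' r' : ℕ) (τ : L.Formula (Fin k')), IsLocal r' τ ∧
              ∀ (M : Type) [L.Structure M], Finite M →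
                (M ⊨ φ ↔ ∃ a : Fin k' → M, τ.Realize a)) := by
  obtain ⟨L, rel, hfin, φ, hpres, hne⟩ := failure_at_arbitrary_quantifier_rank_general
  exact ⟨L, rel, hfin, fun r k hr hk => ⟨φ, hpres r k hr hk, hne⟩⟩
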